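/- (Corollary 2.) In the CreditRisk⁺ model, fix a confidence level δ ∈ (0,1) and let q_δ(L) be the value-at-risk of L under P_α. Then P_α[L = q_δ(L)] > 0, and for every i = 1,…,n the VaR contribution satisfies E_α[N_i | L = q_δ(L)] = (S₀ r_{0,i} P_α[L = q_δ(L) − ν_i] + Σ_{j=1}^k α_j β_j r_{j,i} P_{α(j)}[L = q_δ(L) − ν_i]) / P_α[L = q_δ(L)], where P[L = q_δ(L) − ν_i] is interpreted as 0 when q_δ(L) < ν_i. -/

import Mathlib

open MeasureTheory ProbabilityTheory Real

noncomputable section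

/-- The gamma measure is sigma-finite (needed to form product measures). -/
instance gammaMeasure.instSigmaFinite (a r : ℝ) :
    SigmaFinite (gammaMeasure a r) := by
  unfold ProbabilityTheory.gammaMeasure ProbabilityTheory.gammaPDF
  infer_instance

/-- Conditional Poisson intensity `R_i(s) = r_{0,i} S_0 + sum_j r_{j,i} s_j`. -/
def crpR {n k : ℕ} (S0 : ℝ) (r0 : Fin n → ℝ) (r : Fin k → Fin n → ℝ)
    (s : Fin k → ℝ) (i : Fin n) : ℝ :=
  r0 i * S0 + ∑ j, r j i * s j

/-- The CreditRisk⁺ measure `P_α` on `(Fin k → ℝ) × (Fin n → ℕ)`: the product of the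
Gamma factor measures (shape `α j`, scale `β j`, i.e. rate `(β j)⁻¹`), composed with the
kernel sending the factor vector `s` to the product of Poisson measures with means `R_i(s)`,
recorded jointly with `s`. -/
def crpMeasure {n k : ℕ} (S0 : ℝ) (r0 : Fin n → ℝ) (r : Fin k → Fin n → ℝ)
    (α β : Fin k → ℝ) : Measure ((Fin k → ℝ) × (Fin n → ℕ)) :=
  (Measure.pi fun j => gammaMeasure (α j) (β j)⁻¹).bind fun s =>
    (Measure.pi fun i => poissonMeasure (crpR S0 r0 r s i).toNNReal).map fun x => (s, x)

/-- Portfolio loss `L = ∑ ν_i N_i`. -/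
def crpLoss {n k : ℕ} (ν : Fin n → ℕ) (x : (Fin k → ℝ) × (Fin n → ℕ)) : ℕ :=
  ∑ i, ν i * x.2 i

/-- Value-at-risk of the ℕ-valued loss `L` at level `δ`: the smallest `l` with
`P[L ≤ l] ≥ δ` (a natural number since `L` is ℕ-valued). -/
def crpVaR {n k : ℕ} (P : Measure ((Fin k → ℝ) × (Fin n → ℕ)))
    (ν : Fin n → ℕ) (δ : ℝ) : ℕ :=
  sInf {l : ℕ | ENNReal.ofReal δ ≤ P {x | crpLoss ν x ≤ l}}

/-- `ρ_g`, the radius of convergence of the probability generating function. -/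
def crpRadius {n k : ℕ} (ν : Fin n → ℕ) (r : Fin k → Fin n → ℝ) (β : Fin k → ℝ) : ℝ :=
  sSup {z : ℝ | 0 < z ∧ ∀ j, ∑ i, r j i * z ^ ν i < 1 + (β j)⁻¹}

open scoped ENNReal

/-- Multiplying the gamma density by `x` raises the shape parameter by one. -/
lemma gammaPDF_mul_ofReal {a r : ℝ} (ha : 0 < a) (hr : 0 < r) (x : ℝ) :
    gammaPDF a r x * ENNReal.ofReal x = ENNReal.ofReal (a * r⁻¹) * gammaPDF (a + 1) r x := by
  rcases lt_or_ge x 0 with hx | hx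
  · simp [gammaPDF_of_neg hx]
  · have hG : Gamma a ≠ 0 := (Gamma_pos_of_pos ha).ne'
    have hxa : x ^ a = x ^ (a - 1) * x := by
      rcases hx.eq_or_lt with rfl | hx
      · simp [Real.zero_rpow ha.ne']
      · rw [Real.rpow_sub_one hx.ne', div_mul_cancel₀ _ hx.ne']
    rw [gammaPDF_of_nonneg hx, gammaPDF_of_nonneg hx, ← ENNReal.ofReal_mul' hx,
      ← ENNReal.ofReal_mul (by positivity), Real.Gamma_add_one ha.ne', add_sub_cancel_right, hxa,
      Real.rpow_add_one hr.ne']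
    congr 1
    field_simp

lemma gammaMeasure_withDensity_ofReal {a r : ℝ} (ha : 0 < a) (hr : 0 < r) :
    (gammaMeasure a r).withDensity ENNReal.ofReal
      = ENNReal.ofReal (a * r⁻¹) • gammaMeasure (a + 1) r := by
  have hm : ∀ b, Measurable (gammaPDF b r) := fun b => (measurable_gammaPDFReal b r).ennreal_ofReal
  rw [gammaMeasure, gammaMeasure, ← withDensity_mul _ (hm a) ENNReal.measurable_ofReal,
    ← withDensity_smul _ (hm _)]
  congr 1
  ext x
  exact gammaPDF_mul_ofReal ha hr x

lemma ae_nonneg_gammaMeasure (a r : ℝ) : ∀ᵐ x ∂gammaMeasure a r, 0 ≤ x := by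
  have hm : Measurable (gammaPDF a r) := (measurable_gammaPDFReal a r).ennreal_ofReal
  rw [gammaMeasure, ae_withDensity_iff hm]
  exact ae_of_all _ fun x hx => not_lt.1 fun h => hx (gammaPDF_of_neg h)

/-- A density in one coordinate of a product measure only affects the corresponding factor. -/
lemma pi_withDensity_eval {ι : Type*} [Fintype ι] [DecidableEq ι] {X : ι → Type*}
    [∀ l, MeasurableSpace (X l)] (μ μ' : (l : ι) → Measure (X l))
    [∀ l, IsProbabilityMeasure (μ l)] [∀ l, SigmaFinite (μ' l)] (j : ι)
    {f : X j → ℝ≥0∞} (hf : Measurable f) {c : ℝ≥0∞} (hc : c ≠ 0) (hc' : c ≠ ∞)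
    (hj : (μ j).withDensity f = c • μ' j) (hne : ∀ l, l ≠ j → μ' l = μ l) :
    (Measure.pi μ).withDensity (fun s => f (s j)) = c • Measure.pi μ' := by
  have key : Measure.pi μ' = c⁻¹ • (Measure.pi μ).withDensity (fun s => f (s j)) := by
    refine Measure.pi_eq fun t ht => ?_
    have hj' : ∫⁻ y in t j, f y ∂μ j = c * μ' j (t j) := by
      rw [← withDensity_apply _ (ht j), hj]; simp
    let g : (l : ι) → X l → ℝ≥0∞ := Function.update (fun l => (t l).indicator 1) j
      ((t j).indicator f)
    have hg : ∀ l, Measurable (g l) := by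
      intro l
      by_cases h : l = j
      · subst h; simpa [g] using hf.indicator (ht l)
      · simpa [g, h] using measurable_one.indicator (ht l)
    have hprod : ∫⁻ s, ∏ l, g l (s l) ∂Measure.pi μ = ∏ l, ∫⁻ y, g l y ∂μ l := by
      have := lintegral_prod_eq_prod_lintegral_of_indepFun (μ := Measure.pi μ) Finset.univ
        (fun l s => g l (s l)) (iIndepFun_pi fun l => (hg l).aemeasurable)
        (fun l => (hg l).comp (measurable_pi_apply l))
      rw [this]
      refine Finset.prod_congr rfl fun l _ => ?_
      exact (measurePreserving_eval μ l).lintegral_comp (hg l)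
    have hint : (fun s : (l : ι) → X l => ∏ l, g l (s l))
        = (Set.univ.pi t).indicator (fun s => f (s j)) := by
      ext s
      rw [← Finset.mul_prod_erase _ _ (Finset.mem_univ j)]
      by_cases hs : s ∈ Set.univ.pi t
      · have hs' : ∀ l, s l ∈ t l := fun l => hs l trivial
        rw [Set.indicator_of_mem hs, Finset.prod_eq_one]
        · simp [g, hs' j]
        · intro l hl
          simp [g, Finset.ne_of_mem_erase hl, hs' l]
      · rw [Set.indicator_of_notMem hs]
        obtain ⟨l, hl⟩ : ∃ l, s l ∉ t l := by simpa [Set.mem_pi] using hs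
        by_cases h : l = j
        · subst h; simp [g, hl]
        · rw [Finset.prod_eq_zero (i := l) (by simp [h]), mul_zero]
          simp [g, h, hl]
    rw [Measure.smul_apply, withDensity_apply _ (MeasurableSet.univ_pi ht),
      ← lintegral_indicator (MeasurableSet.univ_pi ht), ← hint, hprod,
      ← Finset.mul_prod_erase _ _ (Finset.mem_univ j),
      ← Finset.mul_prod_erase _ (fun l => μ' l (t l)) (Finset.mem_univ j)]
    have h1 : ∫⁻ y, g j y ∂μ j = c * μ' j (t j) := by
      simp [g, lintegral_indicator (ht j), hj']
    rw [h1, smul_eq_mul, ← mul_assoc, ← mul_assoc, ENNReal.inv_mul_cancel hc hc', one_mul]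
    congr 1
    refine Finset.prod_congr rfl fun l hl => ?_
    have hl := Finset.ne_of_mem_erase hl
    simp [g, hl, hne l hl, lintegral_indicator_one (ht l)]
  rw [key, smul_smul, ENNReal.mul_inv_cancel hc hc', one_smul]

/-- Poisson weights satisfy `(m + 1) p(m + 1) = ρ p(m)`. -/
lemma poissonMeasure_singleton_succ (ρ : NNReal) (m : ℕ) :
    ((m + 1 : ℕ) : ℝ≥0∞) * poissonMeasure ρ {m + 1} = ρ * poissonMeasure ρ {m} := by
  rw [poissonMeasure_singleton, poissonMeasure_singleton, ← ENNReal.ofReal_natCast,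
    ← ENNReal.ofReal_coe_nnreal, ← ENNReal.ofReal_mul (by positivity),
    ← ENNReal.ofReal_mul (by positivity), Nat.factorial_succ]
  congr 1
  push_cast
  field_simp
  ring

section CreditRisk

variable {n k : ℕ} (S0 : ℝ) (r0 : Fin n → ℝ) (r : Fin k → Fin n → ℝ)

/-- Conditional probability of the vector of counts `x` given the factors `s`. -/
def crpWeight (s : Fin k → ℝ) (x : Fin n → ℕ) : ℝ≥0∞ :=
  ∏ i, poissonMeasure (crpR S0 r0 r s i).toNNReal {x i}

lemma measurable_crpR (i : Fin n) : Measurable fun s => crpR S0 r0 r s i := by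
  unfold crpR; fun_prop

lemma measurable_crpWeight (x : Fin n → ℕ) : Measurable fun s => crpWeight S0 r0 r s x := by
  unfold crpWeight
  simp_rw [poissonMeasure_singleton]
  refine Finset.measurable_prod _ fun i _ => ?_
  have := measurable_crpR S0 r0 r i
  fun_prop

lemma lintegral_pi_poissonMeasure_crpR (s : Fin k → ℝ) (f : (Fin n → ℕ) → ℝ≥0∞) :
    ∫⁻ x, f x ∂(Measure.pi fun i => poissonMeasure (crpR S0 r0 r s i).toNNReal)
      = ∑' x, f x * crpWeight S0 r0 r s x := by
  simp [lintegral_countable', crpWeight]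

lemma measurable_crpKernel : Measurable fun s : Fin k → ℝ =>
    (Measure.pi fun i => poissonMeasure (crpR S0 r0 r s i).toNNReal).map
      fun x : Fin n → ℕ => (s, x) := by
  refine Measure.measurable_of_measurable_coe _ fun t ht => ?_
  have h : ∀ s : Fin k → ℝ,
      (Measure.pi fun i => poissonMeasure (crpR S0 r0 r s i).toNNReal).map
        (fun x : Fin n → ℕ => (s, x)) t
      = ∑' x, t.indicator 1 (s, x) * crpWeight S0 r0 r s x := fun s => by
    rw [← lintegral_indicator_one ht, lintegral_map (measurable_one.indicator ht) (by fun_prop),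
      lintegral_pi_poissonMeasure_crpR]
  simp_rw [h]
  refine Measurable.tsum fun x => ?_
  exact ((measurable_one.indicator ht).comp (by fun_prop)).mul (measurable_crpWeight S0 r0 r x)

variable (α β : Fin k → ℝ)

lemma isProbabilityMeasure_crpMeasure (hα : ∀ j, 0 < α j) (hβ : ∀ j, 0 < β j) :
    IsProbabilityMeasure (crpMeasure S0 r0 r α β) := by
  have : ∀ j, IsProbabilityMeasure (gammaMeasure (α j) (β j)⁻¹) := fun j =>
    isProbabilityMeasure_gammaMeasure (hα j) (inv_pos.2 (hβ j))
  exact isProbabilityMeasure_bind (measurable_crpKernel S0 r0 r).aemeasurable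
    (ae_of_all _ fun s => Measure.isProbabilityMeasure_map (by fun_prop))

lemma lintegral_crpMeasure_snd (f : (Fin n → ℕ) → ℝ≥0∞) :
    ∫⁻ x, f x.2 ∂crpMeasure S0 r0 r α β
      = ∑' x, f x * ∫⁻ s, crpWeight S0 r0 r s x
          ∂(Measure.pi fun j => gammaMeasure (α j) (β j)⁻¹) := by
  have hf : Measurable fun x : (Fin k → ℝ) × (Fin n → ℕ) => f x.2 :=
    (measurable_of_countable f).comp measurable_snd
  rw [crpMeasure, Measure.lintegral_bind (measurable_crpKernel S0 r0 r).aemeasurable hf.aemeasurable]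
  have h : ∀ s : Fin k → ℝ, ∫⁻ x, f x.2
      ∂((Measure.pi fun i => poissonMeasure (crpR S0 r0 r s i).toNNReal).map
        fun x : Fin n → ℕ => (s, x)) = ∑' x, f x * crpWeight S0 r0 r s x := fun s => by
    rw [lintegral_map hf (by fun_prop), lintegral_pi_poissonMeasure_crpR]
  simp_rw [h]
  rw [lintegral_tsum fun x => ((measurable_crpWeight S0 r0 r x).const_mul _).aemeasurable]
  simp_rw [lintegral_const_mul _ (measurable_crpWeight S0 r0 r _)]

variable {S0 r0 r α β}

/-- Weighting by the `j`-th factor raises the `j`-th shape parameter by one. -/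
lemma lintegral_ofReal_mul_pi_gammaMeasure (hα : ∀ j, 0 < α j) (hβ : ∀ j, 0 < β j) (j : Fin k)
    {h : (Fin k → ℝ) → ℝ≥0∞} (hh : Measurable h) :
    ∫⁻ s, ENNReal.ofReal (s j) * h s ∂(Measure.pi fun l => gammaMeasure (α l) (β l)⁻¹)
      = ENNReal.ofReal (α j * β j) * ∫⁻ s, h s
          ∂(Measure.pi fun l => gammaMeasure (Function.update α j (α j + 1) l) (β l)⁻¹) := by
  have : ∀ j, IsProbabilityMeasure (gammaMeasure (α j) (β j)⁻¹) := fun j =>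
    isProbabilityMeasure_gammaMeasure (hα j) (inv_pos.2 (hβ j))
  have hc : 0 < α j * β j := mul_pos (hα j) (hβ j)
  have key := pi_withDensity_eval (fun l => gammaMeasure (α l) (β l)⁻¹)
    (fun l => gammaMeasure (Function.update α j (α j + 1) l) (β l)⁻¹) j
    ENNReal.measurable_ofReal (c := ENNReal.ofReal (α j * β j))
    (by simpa using hc) ENNReal.ofReal_ne_top
    (by simpa using gammaMeasure_withDensity_ofReal (hα j) (inv_pos.2 (hβ j)))
    (fun l hl => by simp [hl])
  rw [← smul_eq_mul, ← lintegral_smul_measure, ← key, lintegral_withDensity_eq_lintegral_mul _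
    (by fun_prop) hh]
  rfl

lemma ae_nonneg_pi_gammaMeasure (α β : Fin k → ℝ) :
    ∀ᵐ s ∂(Measure.pi fun l => gammaMeasure (α l) (β l)⁻¹), ∀ j, 0 ≤ s j :=
  ae_all_iff.2 fun j => (Measure.quasiMeasurePreserving_eval
    (fun l => gammaMeasure (α l) (β l)⁻¹) j).ae (ae_nonneg_gammaMeasure (α j) (β j)⁻¹)

lemma crpWeight_update_succ (s : Fin k → ℝ) (y : Fin n → ℕ) (i : Fin n) :
    ((y i + 1 : ℕ) : ℝ≥0∞) * crpWeight S0 r0 r s (Function.update y i (y i + 1))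
      = ENNReal.ofReal (crpR S0 r0 r s i) * crpWeight S0 r0 r s y := by
  unfold crpWeight
  rw [← Finset.mul_prod_erase _ _ (Finset.mem_univ i),
    ← Finset.mul_prod_erase _ (fun l => poissonMeasure (crpR S0 r0 r s l).toNNReal {y l})
      (Finset.mem_univ i), ← mul_assoc, ← mul_assoc, Function.update_self,
    poissonMeasure_singleton_succ]
  congr 1
  refine Finset.prod_congr rfl fun l hl => ?_
  rw [Function.update_of_ne (Finset.ne_of_mem_erase hl)]

lemma lintegral_crpR_mul_crpWeight (hS0 : 0 ≤ S0) (hr0 : ∀ i, 0 ≤ r0 i) (hr : ∀ j i, 0 ≤ r j i)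
    (hα : ∀ j, 0 < α j) (hβ : ∀ j, 0 < β j) (i : Fin n) (y : Fin n → ℕ) :
    ∫⁻ s, ENNReal.ofReal (crpR S0 r0 r s i) * crpWeight S0 r0 r s y
        ∂(Measure.pi fun l => gammaMeasure (α l) (β l)⁻¹)
      = ENNReal.ofReal (S0 * r0 i) * ∫⁻ s, crpWeight S0 r0 r s y
          ∂(Measure.pi fun l => gammaMeasure (α l) (β l)⁻¹)
        + ∑ j, ENNReal.ofReal (α j * β j * r j i) * ∫⁻ s, crpWeight S0 r0 r s y
          ∂(Measure.pi fun l => gammaMeasure (Function.update α j (α j + 1) l) (β l)⁻¹) := by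
  have hw := measurable_crpWeight S0 r0 r y
  have hae : ∀ᵐ s ∂(Measure.pi fun l => gammaMeasure (α l) (β l)⁻¹),
      ENNReal.ofReal (crpR S0 r0 r s i) * crpWeight S0 r0 r s y
        = ENNReal.ofReal (S0 * r0 i) * crpWeight S0 r0 r s y
          + ∑ j, ENNReal.ofReal (r j i) * (ENNReal.ofReal (s j) * crpWeight S0 r0 r s y) := by
    filter_upwards [ae_nonneg_pi_gammaMeasure α β] with s hs
    have hnn : ∀ j ∈ Finset.univ, 0 ≤ r j i * s j := fun j _ => mul_nonneg (hr j i) (hs j)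
    rw [crpR, ENNReal.ofReal_add (mul_nonneg (hr0 i) hS0) (Finset.sum_nonneg hnn),
      ENNReal.ofReal_sum_of_nonneg hnn, add_mul, Finset.sum_mul, mul_comm (r0 i)]
    simp_rw [ENNReal.ofReal_mul (hr _ i), mul_assoc]
  rw [lintegral_congr_ae hae, lintegral_add_left (by fun_prop), lintegral_const_mul _ hw,
    lintegral_finsetSum _ (by fun_prop)]
  congr 1
  refine Finset.sum_congr rfl fun j _ => ?_
  rw [lintegral_const_mul _ (by fun_prop), lintegral_ofReal_mul_pi_gammaMeasure hα hβ j hw,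
    ← mul_assoc, ← ENNReal.ofReal_mul (hr j i), mul_comm (r j i)]

/-- Size-biasing identity: weighting by the count `N_i` shifts it by one, and adds one to the
shape parameter of a factor. -/
lemma lintegral_crpMeasure_count_mul (hS0 : 0 ≤ S0) (hr0 : ∀ i, 0 ≤ r0 i)
    (hr : ∀ j i, 0 ≤ r j i) (hα : ∀ j, 0 < α j) (hβ : ∀ j, 0 < β j) (i : Fin n)
    (f : (Fin n → ℕ) → ℝ≥0∞) :
    ∫⁻ x, x.2 i * f x.2 ∂crpMeasure S0 r0 r α β
      = ENNReal.ofReal (S0 * r0 i) *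
          ∫⁻ x, f (Function.update x.2 i (x.2 i + 1)) ∂crpMeasure S0 r0 r α β
        + ∑ j, ENNReal.ofReal (α j * β j * r j i) *
          ∫⁻ x, f (Function.update x.2 i (x.2 i + 1))
            ∂crpMeasure S0 r0 r (Function.update α j (α j + 1)) β := by
  have hinj : Function.Injective
      fun y : Fin n → ℕ => Function.update y i (y i + 1) := by
    intro y z h
    ext l
    have := congrFun h l
    by_cases hl : l = i
    · subst hl; simpa using this
    · simpa [hl] using this
  rw [lintegral_crpMeasure_snd S0 r0 r α β fun x => x i * f x,
    lintegral_crpMeasure_snd S0 r0 r α β fun x => f (Function.update x i (x i + 1))]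
  simp_rw [fun j => lintegral_crpMeasure_snd S0 r0 r (Function.update α j (α j + 1)) β
    fun x => f (Function.update x i (x i + 1))]
  rw [← hinj.tsum_eq]
  · simp_rw [← ENNReal.tsum_mul_left]
    rw [← Summable.tsum_finsetSum fun _ _ => ENNReal.summable, ← ENNReal.tsum_add]
    refine tsum_congr fun y => ?_
    have h := lintegral_crpR_mul_crpWeight hS0 hr0 hr hα hβ i y
    simp_rw [← crpWeight_update_succ] at h
    rw [lintegral_const_mul _ (measurable_crpWeight S0 r0 r _)] at h
    rw [Function.update_self, mul_right_comm, h, add_mul, Finset.sum_mul]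
    congr 1
    · ring
    · exact Finset.sum_congr rfl fun j _ => by ring
  · intro x hx
    have hxi : x i ≠ 0 := fun h => hx (by simp [h])
    exact ⟨Function.update x i (x i - 1), by
      simp [Nat.sub_add_cancel (Nat.one_le_iff_ne_zero.2 hxi)]⟩

lemma measurable_crpLoss (ν : Fin n → ℕ) :
    Measurable (crpLoss ν : (Fin k → ℝ) × (Fin n → ℕ) → ℕ) := by
  unfold crpLoss
  fun_prop

/-- The value-at-risk is an atom of the loss distribution. -/
lemma measure_crpLoss_eq_crpVaR_pos (P : Measure ((Fin k → ℝ) × (Fin n → ℕ)))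
    [IsProbabilityMeasure P] (ν : Fin n → ℕ) {δ : ℝ} (hδ : δ ∈ Set.Ioo (0 : ℝ) 1) :
    0 < P {x | crpLoss ν x = crpVaR P ν δ} := by
  have hne : {l : ℕ | ENNReal.ofReal δ ≤ P {x | crpLoss ν x ≤ l}}.Nonempty := by
    have hmono : Monotone fun l : ℕ => {x : (Fin k → ℝ) × (Fin n → ℕ) | crpLoss ν x ≤ l} :=
      fun a b hab x hx => le_trans hx hab
    have hlim := tendsto_measure_iUnion_atTop (μ := P) hmono
    have huniv : (⋃ l : ℕ, {x : (Fin k → ℝ) × (Fin n → ℕ) | crpLoss ν x ≤ l}) = Set.univ :=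
      Set.eq_univ_of_forall fun x => Set.mem_iUnion.2 ⟨crpLoss ν x, le_refl (crpLoss ν x)⟩
    rw [huniv, measure_univ] at hlim
    have hδ1 : ENNReal.ofReal δ < 1 := by simpa using hδ.2
    obtain ⟨l, hl⟩ := (hlim.eventually (lt_mem_nhds hδ1)).exists
    exact ⟨l, hl.le⟩
  have hmem : ENNReal.ofReal δ ≤ P {x | crpLoss ν x ≤ crpVaR P ν δ} := Nat.sInf_mem hne
  have hmin : ∀ l < crpVaR P ν δ, P {x | crpLoss ν x ≤ l} < ENNReal.ofReal δ :=
    fun l hl => not_le.1 fun h => Nat.notMem_of_lt_sInf hl h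
  rw [pos_iff_ne_zero]
  intro h0
  generalize crpVaR P ν δ = q at *
  cases q with
  | zero =>
    simp only [Nat.le_zero] at hmem
    rw [h0] at hmem
    exact absurd hδ.1 (by simpa using hmem)
  | succ m =>
    have hsub : {x : (Fin k → ℝ) × (Fin n → ℕ) | crpLoss ν x ≤ m + 1}
        ⊆ {x | crpLoss ν x ≤ m} ∪ {x | crpLoss ν x = m + 1} := by
      intro x hx
      simp only [Set.mem_union, Set.mem_ofPred_eq] at hx ⊢
      omega
    have := (measure_mono hsub).trans (measure_union_le (μ := P) _ _)
    rw [h0, add_zero] at this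
    exact absurd (hmem.trans this) (not_le.2 (hmin m m.lt_succ_self))

lemma crpLoss_update_succ (ν : Fin n → ℕ) (x : (Fin k → ℝ) × (Fin n → ℕ)) (i : Fin n) :
    ∑ l, ν l * Function.update x.2 i (x.2 i + 1) l = crpLoss ν x + ν i := by
  rw [crpLoss, ← Finset.add_sum_erase _ _ (Finset.mem_univ i),
    ← Finset.add_sum_erase _ (fun l => ν l * x.2 l) (Finset.mem_univ i), Function.update_self,
    Finset.sum_congr rfl fun l hl => by rw [Function.update_of_ne (Finset.ne_of_mem_erase hl)]]
  ring

lemma lintegral_shifted_loss (P : Measure ((Fin k → ℝ) × (Fin n → ℕ))) (ν : Fin n → ℕ)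
    (q : ℕ) (i : Fin n) :
    ∫⁻ x, (if ∑ l, ν l * Function.update x.2 i (x.2 i + 1) l = q then 1 else 0) ∂P
      = if ν i ≤ q then P {x | crpLoss ν x = q - ν i} else 0 := by
  simp_rw [crpLoss_update_succ]
  split_ifs with h
  · have hms : MeasurableSet {x : (Fin k → ℝ) × (Fin n → ℕ) | crpLoss ν x = q - ν i} :=
      measurable_crpLoss ν (measurableSet_singleton (q - ν i))
    rw [← lintegral_indicator_one hms]
    refine lintegral_congr fun x => ?_
    simp only [Set.indicator_apply, Set.mem_ofPred_eq, Pi.one_apply]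
    congr 1
    simp only [eq_iff_iff]
    omega
  · refine lintegral_eq_zero_of_ae_eq_zero (ae_of_all _ fun x => if_neg ?_)
    omega

/-- Expectation of the count `N_i` on the event `L = q`. -/
lemma setIntegral_count_crpLoss_eq (hS0 : 0 ≤ S0) (hr0 : ∀ i, 0 ≤ r0 i)
    (hr : ∀ j i, 0 ≤ r j i) (hα : ∀ j, 0 < α j) (hβ : ∀ j, 0 < β j) (ν : Fin n → ℕ) (q : ℕ)
    (i : Fin n) :
    ∫ x in {y | crpLoss ν y = q}, (x.2 i : ℝ) ∂crpMeasure S0 r0 r α β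
      = S0 * r0 i *
          (if ν i ≤ q then (crpMeasure S0 r0 r α β {x | crpLoss ν x = q - ν i}).toReal else 0)
        + ∑ j, α j * β j * r j i *
          (if ν i ≤ q then (crpMeasure S0 r0 r (Function.update α j (α j + 1)) β
            {x | crpLoss ν x = q - ν i}).toReal else 0) := by
  have := isProbabilityMeasure_crpMeasure S0 r0 r α β hα hβ
  have hα' : ∀ j l, 0 < Function.update α j (α j + 1) l := by
    intro j l
    by_cases hl : l = j
    · subst hl; simpa using (hα l).trans (lt_add_one _)
    · simpa [hl] using hα l
  have := fun j => isProbabilityMeasure_crpMeasure S0 r0 r _ β (hα' j) hβ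
  have hms : MeasurableSet {y : (Fin k → ℝ) × (Fin n → ℕ) | crpLoss ν y = q} :=
    measurable_crpLoss ν (measurableSet_singleton q)
  have hmeas : Measurable fun x : (Fin k → ℝ) × (Fin n → ℕ) => (x.2 i : ℝ) := by fun_prop
  have hlint : ∫⁻ x in {y | crpLoss ν y = q}, ENNReal.ofReal (x.2 i : ℝ)
        ∂crpMeasure S0 r0 r α β
      = ∫⁻ x, x.2 i * (if ∑ l, ν l * x.2 l = q then 1 else 0) ∂crpMeasure S0 r0 r α β := by
    rw [← lintegral_indicator hms]
    refine lintegral_congr fun x => ?_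
    simp [Set.indicator_apply, crpLoss]
  rw [integral_eq_lintegral_of_nonneg_ae (ae_of_all _ fun x => Nat.cast_nonneg _)
      hmeas.aestronglyMeasurable, hlint,
    lintegral_crpMeasure_count_mul hS0 hr0 hr hα hβ i
      fun x => if ∑ l, ν l * x l = q then 1 else 0]
  simp_rw [lintegral_shifted_loss]
  have hfin : ∀ (P : Measure ((Fin k → ℝ) × (Fin n → ℕ))) [IsProbabilityMeasure P],
      (if ν i ≤ q then P {x | crpLoss ν x = q - ν i} else 0) ≠ ∞ := by
    intro P _
    split_ifs <;> simp
  have hcoef : ∀ j, 0 ≤ α j * β j * r j i :=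
    fun j => mul_nonneg (mul_nonneg (hα j).le (hβ j).le) (hr j i)
  rw [ENNReal.toReal_add (ENNReal.mul_ne_top ENNReal.ofReal_ne_top (hfin _))
      (ENNReal.sum_ne_top.2 fun j _ => ENNReal.mul_ne_top ENNReal.ofReal_ne_top (hfin _)),
    ENNReal.toReal_sum fun j _ => ENNReal.mul_ne_top ENNReal.ofReal_ne_top (hfin _)]
  simp_rw [ENNReal.toReal_mul, ENNReal.toReal_ofReal (hcoef _),
    ENNReal.toReal_ofReal (mul_nonneg hS0 (hr0 i)), apply_ite ENNReal.toReal, ENNReal.toReal_zero]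

end CreditRisk

/-- Corollary 2: `P_α[L = q_δ(L)] > 0` and the VaR contribution satisfies
`E_α[N_i | L = q_δ(L)] = (S₀ r_{0,i} P_α[L = q−ν_i] + ∑_j α_j β_j r_{j,i} P_{α(j)}[L = q−ν_i])
/ P_α[L = q]`, with `P[L = q − ν_i]` interpreted as `0` when `q < ν_i`. -/
theorem crp_var_contribution {n k : ℕ} (hn : 0 < n) (hk : 0 < k)
    (ν : Fin n → ℕ) (hν : ∀ i, 0 < ν i)
    (S0 : ℝ) (hS0 : 0 ≤ S0)
    (r0 : Fin n → ℝ) (r : Fin k → Fin n → ℝ)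
    (hr0 : ∀ i, 0 ≤ r0 i) (hr : ∀ j i, 0 ≤ r j i)
    (hr0sum : ∑ i, r0 i = 1) (hrsum : ∀ j, ∑ i, r j i = 1)
    (hrpos : ∀ i, 0 < ∑ j, r j i)
    (α β : Fin k → ℝ) (hα : ∀ j, 0 < α j) (hβ : ∀ j, 0 < β j)
    (δ : ℝ) (hδ : δ ∈ Set.Ioo (0 : ℝ) 1) (i : Fin n) :
    0 < (crpMeasure S0 r0 r α β)
        {x | crpLoss ν x = crpVaR (crpMeasure S0 r0 r α β) ν δ} ∧
    (∫ x in {y | crpLoss ν y = crpVaR (crpMeasure S0 r0 r α β) ν δ},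
        (x.2 i : ℝ) ∂(crpMeasure S0 r0 r α β)) /
      ((crpMeasure S0 r0 r α β)
        {x | crpLoss ν x = crpVaR (crpMeasure S0 r0 r α β) ν δ}).toReal
      = (S0 * r0 i *
          (if ν i ≤ crpVaR (crpMeasure S0 r0 r α β) ν δ then
            ((crpMeasure S0 r0 r α β)
              {x | crpLoss ν x = crpVaR (crpMeasure S0 r0 r α β) ν δ - ν i}).toReal
           else 0)
         + ∑ j, α j * β j * r j i *
          (if ν i ≤ crpVaR (crpMeasure S0 r0 r α β) ν δ then
            ((crpMeasure S0 r0 r (Function.update α j (α j + 1)) β)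
              {x | crpLoss ν x = crpVaR (crpMeasure S0 r0 r α β) ν δ - ν i}).toReal
           else 0)) /
        ((crpMeasure S0 r0 r α β)
          {x | crpLoss ν x = crpVaR (crpMeasure S0 r0 r α β) ν δ}).toReal := by
  have := isProbabilityMeasure_crpMeasure S0 r0 r α β hα hβ
  refine ⟨measure_crpLoss_eq_crpVaR_pos _ ν hδ, ?_⟩
  rw [setIntegral_count_crpLoss_eq hS0 hr0 hr hα hβ]
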